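/- Let R be a commutative Noetherian local ring and let M be a nonzero finitely generated R-module with finite injective dimension. Then the reducing Gorenstein dimension of M equals the reducing projective dimension of M (as elements of ℕ ∪ {∞}). -/

import Mathlib

open CategoryTheory Pointwise

universe u

variable (R : Type u) [CommRing R]

/-- `Ext^n_R(X, Y) = 0`. -/
def ExtVanish (X Y : Type u) [AddCommGroup X] [Module R X]
    [AddCommGroup Y] [Module R Y] (n : ℕ) : Prop :=
  Subsingleton (((Ext R (ModuleCat.{u} R) n).obj
    (Opposite.op (ModuleCat.of R X))).obj (ModuleCat.of R Y))

/-- A finitely generated module `X` is totally reflexive if the evaluation map to the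
double dual is bijective and `Ext^i(X, R) = 0 = Ext^i(X^*, R)` for all `i ≥ 1`. -/
def IsTotallyReflexive (X : Type u) [AddCommGroup X] [Module R X] : Prop :=
  Module.Finite R X ∧
  Function.Bijective (Module.Dual.eval R X) ∧
  (∀ i : ℕ, 1 ≤ i → ExtVanish R X R i) ∧
  (∀ i : ℕ, 1 ≤ i → ExtVanish R (Module.Dual R X) R i)

/-- `0 → A → B → C → 0` is a short exact sequence. -/
def IsShortExact {A B C : Type u} [AddCommGroup A] [Module R A] [AddCommGroup B] [Module R B]
    [AddCommGroup C] [Module R C] (f : A →ₗ[R] B) (g : B →ₗ[R] C) : Prop :=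
  Function.Injective f ∧ Function.Surjective g ∧ Function.Exact f g

/-- Gorenstein dimension at most `n`: there is a resolution of length `≤ n`
by totally reflexive modules. -/
def GdimLE : ℕ → ModuleCat.{u} R → Prop
  | 0, M => IsTotallyReflexive R M
  | n + 1, M => ∃ (X K : ModuleCat.{u} R) (f : K →ₗ[R] X) (g : X →ₗ[R] M),
      IsTotallyReflexive R X ∧ IsShortExact R f g ∧ GdimLE n K

/-- Projective dimension at most `n`. -/
def PdimLE : ℕ → ModuleCat.{u} R → Prop
  | 0, M => Module.Finite R M ∧ Module.Projective R M
  | n + 1, M => ∃ (X K : ModuleCat.{u} R) (f : K →ₗ[R] X) (g : X →ₗ[R] M),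
      Module.Finite R X ∧ Module.Projective R X ∧ IsShortExact R f g ∧ PdimLE n K

/-- Injective dimension at most `n`. -/
def InjdimLE : ℕ → ModuleCat.{u} R → Prop
  | 0, M => Module.Injective R M
  | n + 1, M => ∃ (I C : ModuleCat.{u} R) (f : M →ₗ[R] I) (g : I →ₗ[R] C),
      Module.Injective R I ∧ IsShortExact R f g ∧ InjdimLE n C

/-- The Gorenstein dimension, as an element of `ℕ∞`. -/
noncomputable def Gdim (M : ModuleCat.{u} R) : ℕ∞ :=
  sInf {n : ℕ∞ | ∃ m : ℕ, n = (m : ℕ∞) ∧ GdimLE R m M}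

/-- The projective dimension, as an element of `ℕ∞`. -/
noncomputable def Pdim (M : ModuleCat.{u} R) : ℕ∞ :=
  sInf {n : ℕ∞ | ∃ m : ℕ, n = (m : ℕ∞) ∧ PdimLE R m M}

/-- A local ring is Gorenstein if it has finite injective dimension over itself. -/
def IsGorensteinRing : Prop :=
  ∃ n : ℕ, InjdimLE R n (ModuleCat.of R R)

/-- `IsSyzygy R n S K` : `S` is an `n`-th syzygy of `K`, i.e. there is an exact sequence
`0 → S → F_{n-1} → ⋯ → F_0 → K → 0` with each `F_j` finitely generated free. -/
def IsSyzygy : ℕ → ModuleCat.{u} R → ModuleCat.{u} R → Prop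
  | 0, S, K => Nonempty (S ≃ₗ[R] K)
  | n + 1, S, K => ∃ (W F : ModuleCat.{u} R) (f : W →ₗ[R] F) (g : F →ₗ[R] K),
      Module.Free R F ∧ Module.Finite R F ∧ IsShortExact R f g ∧ IsSyzygy n S W

/-- One step in a reducing sequence: a short exact sequence
`0 → K^{⊕a} → L → (Ω^n K)^{⊕b} → 0`. -/
def ReducingStep (K L : ModuleCat.{u} R) (a b n : ℕ) : Prop :=
  ∃ (W : ModuleCat.{u} R) (f : (Fin a → K) →ₗ[R] L) (g : L →ₗ[R] (Fin b → W)),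
    IsSyzygy R n W K ∧ IsShortExact R f g

/-- `M` admits a reducing sequence `K_0 = M, K_1, …, K_r` relative to the property `P`,
that is, short exact sequences `0 → K_{i-1}^{⊕a_i} → K_i → (Ω^{n_i}K_{i-1})^{⊕b_i} → 0`
with `a_i, b_i, n_i ≥ 1` and `P (K_r)`. -/
def HasReducingSeq (P : ModuleCat.{u} R → Prop) (M : ModuleCat.{u} R) (r : ℕ) : Prop :=
  ∃ (K : Fin (r + 1) → ModuleCat.{u} R) (a b n : Fin r → ℕ),
    K 0 = M ∧ (∀ i, Module.Finite R (K i)) ∧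
    (∀ i : Fin r, 1 ≤ a i ∧ 1 ≤ b i ∧ 1 ≤ n i ∧
      ReducingStep R (K i.castSucc) (K i.succ) (a i) (b i) (n i)) ∧
    P (K (Fin.last r))

/-- The reducing invariant attached to the finiteness property `P`. -/
noncomputable def ReducingDim (P : ModuleCat.{u} R → Prop) (M : ModuleCat.{u} R) : ℕ∞ :=
  sInf {n : ℕ∞ | ∃ r : ℕ, n = (r : ℕ∞) ∧ HasReducingSeq R P M r}

/-- The reducing Gorenstein dimension. -/
noncomputable def rGdim (M : ModuleCat.{u} R) : ℕ∞ :=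
  ReducingDim R (fun N => ∃ m : ℕ, GdimLE R m N) M

/-- The reducing projective dimension. -/
noncomputable def rPdim (M : ModuleCat.{u} R) : ℕ∞ :=
  ReducingDim R (fun N => ∃ m : ℕ, PdimLE R m N) M

/-- depth of a module over a local ring: `inf { i | Ext^i(k, M) ≠ 0 }`. -/
noncomputable def depth [IsLocalRing R] (M : ModuleCat.{u} R) : ℕ∞ :=
  sInf {n : ℕ∞ | ∃ i : ℕ, n = (i : ℕ∞) ∧
    ¬ ExtVanish R (R ⧸ IsLocalRing.maximalIdeal R) M i}

/-- maximal Cohen-Macaulay: depth equals the Krull dimension of the ring. -/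
def IsMCM [IsLocalRing R] (M : ModuleCat.{u} R) : Prop :=
  (depth R M : WithBot ℕ∞) = ringKrullDim R

/-- torsion-free: every non zero-divisor of `R` is a non zero-divisor on `M`. -/
def IsTorsionFreeModule (M : Type u) [AddCommGroup M] [Module R M] : Prop :=
  ∀ r ∈ nonZeroDivisors R, ∀ m : M, r • m = 0 → m = 0

/-!
If `M` has finite injective dimension `d`, then `Ext^i(X, M) = 0` for `i > d` and every `X`.
A totally reflexive module is an arbitrarily high syzygy of totally reflexive modules, so dimension
shifting gives `Ext^i(X, M) = 0` for every totally reflexive `X` and every `i ≥ 1`. This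
orthogonality is inherited by finite direct sums, syzygies and extensions, hence by every term of
a reducing sequence of `M`. If a module `N` satisfying it is totally reflexive, then the inclusion
of `N` into a projective module with totally reflexive cokernel splits, so `N` is projective; if
only `Gdim N < ∞`, the same holds for a high syzygy of `N`, so `pd N < ∞`.
-/

section Ext

variable {R}
variable {A B C X Y : Type u} [AddCommGroup A] [Module R A] [AddCommGroup B] [Module R B]
  [AddCommGroup C] [Module R C] [AddCommGroup X] [Module R X] [AddCommGroup Y] [Module R Y]

theorem extVanish_iff_exactAt (P : ProjectiveResolution (ModuleCat.of R X)) {n : ℕ} :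
    ExtVanish R X Y n ↔ (P.complex.linearYonedaObj R (ModuleCat.of R Y)).ExactAt n := by
  rw [ExtVanish, ← ModuleCat.isZero_iff_subsingleton, (P.isoExt n _).isZero_iff,
    HomologicalComplex.exactAt_iff_isZero_homology]

theorem extVanish_zero_iff_forall_ext_eq_zero :
    ExtVanish R X Y 0 ↔ ∀ e : Abelian.Ext (ModuleCat.of R X) (ModuleCat.of R Y) 0, e = 0 := by
  let P := projectiveResolution (ModuleCat.of R X)
  let π : P.complex.X 0 ⟶ ModuleCat.of R X := P.π.f 0
  have hπ : P.complex.d 1 0 ≫ π = 0 := P.complex_d_comp_π_f_zero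
  have : Epi π := inferInstanceAs (Epi (P.π.f 0))
  have hdesc (φ : P.complex.X 0 ⟶ ModuleCat.of R Y) (hφ : P.complex.d 1 0 ≫ φ = 0) :
      ∃ ψ : ModuleCat.of R X ⟶ ModuleCat.of R Y, π ≫ ψ = φ :=
    ⟨P.exact₀.desc φ hφ, P.exact₀.g_desc φ hφ⟩
  have hP : ExtVanish R X Y 0 ↔ ∀ φ : P.complex.X 0 ⟶ ModuleCat.of R Y,
      P.complex.d 1 0 ≫ φ = 0 → φ = 0 := by
    rw [extVanish_iff_exactAt P, HomologicalComplex.exactAt_iff' _ 0 0 1 (by simp) (by simp),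
      ShortComplex.exact_iff_mono _ ((P.complex.linearYonedaObj R _).shape 0 0 (by simp)),
      ModuleCat.mono_iff_injective, injective_iff_map_eq_zero]
    rfl
  rw [hP, ← subsingleton_iff_forall_eq, Abelian.Ext.homEquiv₀.subsingleton_congr,
    subsingleton_iff_forall_eq 0]
  constructor
  · intro h ψ
    rw [← cancel_epi π, h (π ≫ ψ) (by rw [reassoc_of% hπ, Limits.zero_comp]), Limits.comp_zero]
  · intro h φ hφ
    obtain ⟨ψ, rfl⟩ := hdesc φ hφ
    rw [h ψ, Limits.comp_zero]

theorem extVanish_succ_iff_forall_ext_eq_zero {n : ℕ} : ExtVanish R X Y (n + 1) ↔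
    ∀ e : Abelian.Ext (ModuleCat.of R X) (ModuleCat.of R Y) (n + 1), e = 0 := by
  let P := projectiveResolution (ModuleCat.of R X)
  have hP : ExtVanish R X Y (n + 1) ↔ ∀ φ : P.complex.X (n + 1) ⟶ ModuleCat.of R Y,
      P.complex.d (n + 2) (n + 1) ≫ φ = 0 →
        ∃ ψ : P.complex.X n ⟶ ModuleCat.of R Y, P.complex.d (n + 1) n ≫ ψ = φ := by
    rw [extVanish_iff_exactAt P,
      HomologicalComplex.exactAt_iff' _ n (n + 1) (n + 2) (by simp) (by simp),
      ShortComplex.moduleCat_exact_iff]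
    rfl
  rw [hP]
  constructor
  · intro h e
    obtain ⟨φ, hφ, rfl⟩ := P.extMk_surjective e (n + 2) rfl
    exact (P.extMk_eq_zero_iff _ _ _ _ n rfl).2 (h φ hφ)
  · exact fun h φ hφ ↦ (P.extMk_eq_zero_iff φ (n + 2) rfl hφ n rfl).1 (h _)

theorem extVanish_iff_forall_ext_eq_zero {n : ℕ} : ExtVanish R X Y n ↔
    ∀ e : Abelian.Ext (ModuleCat.of R X) (ModuleCat.of R Y) n, e = 0 := by
  cases n with
  | zero => exact extVanish_zero_iff_forall_ext_eq_zero
  | succ n => exact extVanish_succ_iff_forall_ext_eq_zero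

theorem ExtVanish.of_projective [Module.Projective R X] {n : ℕ} : ExtVanish R X Y (n + 1) := by
  have : Projective (ModuleCat.of R X) := (IsProjective.iff_projective X).1 inferInstance
  exact extVanish_iff_forall_ext_eq_zero.2 Abelian.Ext.eq_zero_of_projective

theorem ExtVanish.of_injective [Module.Injective R Y] {n : ℕ} : ExtVanish R X Y (n + 1) := by
  have : Injective (ModuleCat.of R Y) := Module.injective_object_of_injective_module R Y
  exact extVanish_iff_forall_ext_eq_zero.2 Abelian.Ext.eq_zero_of_injective

theorem extVanish_congr_left (e : A ≃ₗ[R] B) {n : ℕ} : ExtVanish R A Y n ↔ ExtVanish R B Y n :=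
  (((Ext R (ModuleCat R) n).mapIso e.toModuleIso.op).app
    (ModuleCat.of R Y)).toLinearEquiv.toEquiv.subsingleton_congr.symm

theorem extVanish_congr_right (e : A ≃ₗ[R] B) {n : ℕ} : ExtVanish R X A n ↔ ExtVanish R X B n :=
  (((Ext R (ModuleCat R) n).obj (.op (ModuleCat.of R X))).mapIso
    e.toModuleIso).toLinearEquiv.toEquiv.subsingleton_congr

theorem ExtVanish.pi {ι : Type} [Finite ι] {Z : ι → Type u} [∀ i, AddCommGroup (Z i)]
    [∀ i, Module R (Z i)] {n : ℕ} (h : ∀ i, ExtVanish R X (Z i) n) :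
    ExtVanish R X (∀ i, Z i) n := by
  have := Fintype.ofFinite ι
  let Z' (i : ι) := ModuleCat.of R (Z i)
  simp only [extVanish_iff_forall_ext_eq_zero, ← subsingleton_iff_forall_eq] at h
  rw [extVanish_congr_right (ModuleCat.biproductIsoPi Z').toLinearEquiv.symm,
    extVanish_iff_forall_ext_eq_zero, ← subsingleton_iff_forall_eq]
  exact (Abelian.Ext.addEquivBiproduct (ModuleCat.of R X)
    (Limits.biproduct.isBilimit Z') n).subsingleton

namespace IsShortExact

variable {f : A →ₗ[R] B} {g : B →ₗ[R] C} {n : ℕ}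

theorem injective (h : IsShortExact R f g) : Function.Injective f := h.1

theorem surjective (h : IsShortExact R f g) : Function.Surjective g := h.2.1

theorem exact (h : IsShortExact R f g) : Function.Exact f g := h.2.2

theorem comp_eq_zero (h : IsShortExact R f g) : g.comp f = 0 := h.exact.linearMap_comp_eq_zero

/-- The short complex in `ModuleCat R` underlying a short exact sequence of modules. It is
reducible, so that its terms are recognised as `A`, `B` and `C` in the long exact sequences of
`Abelian.Ext`. -/
abbrev shortComplex (h : IsShortExact R f g) : ShortComplex (ModuleCat.{u} R) :=
  .mk (ModuleCat.ofHom f) (ModuleCat.ofHom g) (ModuleCat.hom_ext h.comp_eq_zero)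

theorem shortExact (h : IsShortExact R f g) : h.shortComplex.ShortExact where
  exact := (ShortComplex.moduleCat_exact_iff _).2 fun b ↦ (h.exact b).1
  mono_f := (ModuleCat.mono_iff_injective _).2 h.injective
  epi_g := (ModuleCat.epi_iff_surjective _).2 h.surjective

theorem contravariant_extVanish₁ (h : IsShortExact R f g) (hB : ExtVanish R B Y n)
    (hC : ExtVanish R C Y (n + 1)) : ExtVanish R A Y n := by
  rw [extVanish_iff_forall_ext_eq_zero] at *
  intro e
  obtain ⟨x, rfl⟩ :=
    Abelian.Ext.contravariant_sequence_exact₁ h.shortExact _ e (add_comm 1 n) (hC _)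
  rw [hB x, Abelian.Ext.comp_zero]

theorem contravariant_extVanish₂ (h : IsShortExact R f g) (hA : ExtVanish R A Y n)
    (hC : ExtVanish R C Y n) : ExtVanish R B Y n := by
  rw [extVanish_iff_forall_ext_eq_zero] at *
  intro e
  obtain ⟨x, rfl⟩ := Abelian.Ext.contravariant_sequence_exact₂ h.shortExact _ e (hA _)
  rw [hC x, Abelian.Ext.comp_zero]

theorem contravariant_extVanish₃ (h : IsShortExact R f g) (hA : ExtVanish R A Y n)
    (hB : ExtVanish R B Y (n + 1)) : ExtVanish R C Y (n + 1) := by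
  rw [extVanish_iff_forall_ext_eq_zero] at *
  intro e
  obtain ⟨x, rfl⟩ :=
    Abelian.Ext.contravariant_sequence_exact₃ h.shortExact _ e (hB _) (add_comm 1 n)
  rw [hA x, Abelian.Ext.comp_zero]

theorem covariant_extVanish₁ (h : IsShortExact R f g) (hB : ExtVanish R X B (n + 1))
    (hC : ExtVanish R X C n) : ExtVanish R X A (n + 1) := by
  rw [extVanish_iff_forall_ext_eq_zero] at *
  intro e
  obtain ⟨x, rfl⟩ := Abelian.Ext.covariant_sequence_exact₁ _ h.shortExact e (hB _) rfl
  rw [hC x, Abelian.Ext.zero_comp]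

theorem covariant_extVanish₂ (h : IsShortExact R f g) (hA : ExtVanish R X A n)
    (hC : ExtVanish R X C n) : ExtVanish R X B n := by
  rw [extVanish_iff_forall_ext_eq_zero] at *
  intro e
  obtain ⟨x, rfl⟩ := Abelian.Ext.covariant_sequence_exact₂ _ h.shortExact e (hC _)
  rw [hA x, Abelian.Ext.zero_comp]

theorem exists_comp_eq_of_extVanish (h : IsShortExact R f g) (hC : ExtVanish R C Y 1)
    (φ : A →ₗ[R] Y) : ∃ ψ : B →ₗ[R] Y, ψ.comp f = φ := by
  rw [extVanish_iff_forall_ext_eq_zero] at hC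
  obtain ⟨x, hx⟩ := Abelian.Ext.contravariant_sequence_exact₁ h.shortExact _
    (Abelian.Ext.mk₀ (ModuleCat.ofHom φ)) (add_comm 1 0) (hC _)
  obtain ⟨ψ, rfl⟩ := (Abelian.Ext.mk₀_bijective _ _).2 x
  rw [Abelian.Ext.mk₀_comp_mk₀] at hx
  exact ⟨ψ.hom, congr(($((Abelian.Ext.mk₀_bijective _ _).1 hx)).hom)⟩

theorem extVanish_one_of_exists_comp_eq (h : IsShortExact R f g) (hB : ExtVanish R B Y 1)
    (hf : ∀ φ : A →ₗ[R] Y, ∃ ψ : B →ₗ[R] Y, ψ.comp f = φ) : ExtVanish R C Y 1 := by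
  rw [extVanish_iff_forall_ext_eq_zero] at *
  intro e
  obtain ⟨x, rfl⟩ :=
    Abelian.Ext.contravariant_sequence_exact₃ h.shortExact _ e (hB _) (add_comm 1 0)
  obtain ⟨φ, rfl⟩ := (Abelian.Ext.mk₀_bijective _ _).2 x
  obtain ⟨ψ, hψ⟩ := hf φ.hom
  obtain rfl : ModuleCat.ofHom f ≫ ModuleCat.ofHom ψ = φ := ModuleCat.hom_ext hψ
  rw [← Abelian.Ext.mk₀_comp_mk₀]
  exact h.shortExact.extClass_comp_assoc _

end IsShortExact

end Ext

section Dual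

variable {R}
variable {A A' B C : Type u} [AddCommGroup A] [Module R A] [AddCommGroup A'] [Module R A']
  [AddCommGroup B] [Module R B] [AddCommGroup C] [Module R C] {f : A →ₗ[R] B} {g : B →ₗ[R] C}

theorem isShortExact_subtype_ker (hg : Function.Surjective g) :
    IsShortExact R (LinearMap.ker g).subtype g :=
  ⟨Subtype.val_injective, hg, LinearMap.exact_subtype_ker_map g⟩

namespace IsShortExact

theorem comp_linearEquiv (h : IsShortExact R f g) (e : A' ≃ₗ[R] A) :
    IsShortExact R (f.comp e.toLinearMap) g :=
  ⟨h.injective.comp e.injective, h.surjective,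
    LinearEquiv.precomp_exact_iff_exact.2 h.exact⟩

theorem dual (h : IsShortExact R f g) (hC : ExtVanish R C R 1) :
    IsShortExact R g.dualMap f.dualMap :=
  ⟨LinearMap.dualMap_injective_of_surjective h.surjective, h.exists_comp_eq_of_extVanish hC,
    LinearMap.exact_lcomp_of_exact_of_surjective R h.exact h.surjective⟩

theorem isReflexive_middle [Module.IsReflexive R A] [Module.IsReflexive R C]
    (h : IsShortExact R f g) (h' : IsShortExact R f.dualMap.dualMap g.dualMap.dualMap) :
    Module.IsReflexive R B where
  bijective_dual_eval' :=
    LinearMap.bijective_of_surjective_of_bijective_of_bijective_of_injective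
      (0 : PUnit →ₗ[R] A) f g (0 : C →ₗ[R] PUnit) (0 : PUnit →ₗ[R] _) f.dualMap.dualMap
      g.dualMap.dualMap (0 : _ →ₗ[R] PUnit) .id (Module.Dual.eval R A) (Module.Dual.eval R B)
      (Module.Dual.eval R C) .id (by simp) rfl rfl (by simp)
      ((LinearMap.exact_zero_iff_injective _ _).2 h.injective) h.exact
      ((LinearMap.exact_zero_iff_surjective _ _).2 h.surjective)
      ((LinearMap.exact_zero_iff_injective _ _).2 h'.injective) h'.exact
      ((LinearMap.exact_zero_iff_surjective _ _).2 h'.surjective)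
      Function.surjective_id (Module.bijective_dual_eval R A) (Module.bijective_dual_eval R C)
      Function.injective_id

theorem isReflexive_left [Module.IsReflexive R B] [Module.IsReflexive R C]
    (h : IsShortExact R f g) (h' : IsShortExact R f.dualMap.dualMap g.dualMap.dualMap) :
    Module.IsReflexive R A where
  bijective_dual_eval' :=
    LinearMap.bijective_of_bijective_of_injective_of_left_exact f g f.dualMap.dualMap
      g.dualMap.dualMap (Module.Dual.eval R A) (Module.Dual.eval R B) (Module.Dual.eval R C)
      rfl rfl h.exact h'.exact (Module.bijective_dual_eval R B)
      (Module.bijective_dual_eval R C).injective h.injective h'.injective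

end IsShortExact

end Dual

namespace IsTotallyReflexive

variable {R}
variable {A B C X : Type u} [AddCommGroup A] [Module R A] [AddCommGroup B] [Module R B]
  [AddCommGroup C] [Module R C] [AddCommGroup X] [Module R X] {f : A →ₗ[R] B} {g : B →ₗ[R] C}

theorem finite (hX : IsTotallyReflexive R X) : Module.Finite R X := hX.1

theorem isReflexive (hX : IsTotallyReflexive R X) : Module.IsReflexive R X := ⟨hX.2.1⟩

theorem extVanish (hX : IsTotallyReflexive R X) (i : ℕ) : ExtVanish R X R (i + 1) :=
  hX.2.2.1 _ i.succ_pos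

theorem extVanish_dual (hX : IsTotallyReflexive R X) (i : ℕ) :
    ExtVanish R (Module.Dual R X) R (i + 1) :=
  hX.2.2.2 _ i.succ_pos

theorem of_extVanish [Module.Finite R X] [Module.IsReflexive R X]
    (h : ∀ i, ExtVanish R X R (i + 1)) (h' : ∀ i, ExtVanish R (Module.Dual R X) R (i + 1)) :
    IsTotallyReflexive R X :=
  ⟨‹_›, Module.bijective_dual_eval R X, Nat.rec (by simp) fun i _ _ ↦ h i,
    Nat.rec (by simp) fun i _ _ ↦ h' i⟩

theorem of_projective [Module.Finite R X] [Module.Projective R X] : IsTotallyReflexive R X :=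
  of_extVanish (fun _ ↦ .of_projective) fun _ ↦ .of_projective

theorem dual [IsNoetherianRing R] (hX : IsTotallyReflexive R X) :
    IsTotallyReflexive R (Module.Dual R X) := by
  have := hX.finite
  have := hX.isReflexive
  exact of_extVanish hX.extVanish_dual fun i ↦
    (extVanish_congr_left (Module.evalEquiv R X)).1 (hX.extVanish i)

theorem of_isShortExact (hA : IsTotallyReflexive R A)
    (hC : IsTotallyReflexive R C) (h : IsShortExact R f g) : IsTotallyReflexive R B := by
  have := hA.finite
  have := hA.isReflexive
  have := hC.finite
  have := hC.isReflexive
  have h' := h.dual (hC.extVanish 0)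
  have : Module.Finite R B := .of_exact h.exact h.surjective
  have := h.isReflexive_middle (h'.dual (hA.extVanish_dual 0))
  exact of_extVanish (fun i ↦ h.contravariant_extVanish₂ (hA.extVanish i) (hC.extVanish i))
    fun i ↦ h'.contravariant_extVanish₂ (hC.extVanish_dual i) (hA.extVanish_dual i)

theorem left_of_isShortExact [IsNoetherianRing R] (hB : IsTotallyReflexive R B)
    (hC : IsTotallyReflexive R C) (h : IsShortExact R f g) : IsTotallyReflexive R A := by
  have := hB.finite
  have := hB.isReflexive
  have := hC.isReflexive
  have h' := h.dual (hC.extVanish 0)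
  have hext (φ : Module.Dual R (Module.Dual R C)) :
      ∃ ψ : Module.Dual R (Module.Dual R B), ψ.comp g.dualMap = φ := by
    obtain ⟨c, rfl⟩ := (Module.bijective_dual_eval R C).surjective φ
    obtain ⟨b, rfl⟩ := h.surjective c
    exact ⟨Module.Dual.eval R B b, rfl⟩
  have hA (i : ℕ) : ExtVanish R (Module.Dual R A) R (i + 1) := by
    cases i with
    | zero => exact h'.extVanish_one_of_exists_comp_eq (hB.extVanish_dual 0) hext
    | succ i => exact h'.contravariant_extVanish₃ (hC.extVanish_dual i) (hB.extVanish_dual _)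
  have := h.isReflexive_left (h'.dual (hA 0))
  have : Module.Finite R A := Module.Finite.of_injective f h.injective
  exact of_extVanish
    (fun i ↦ h.contravariant_extVanish₁ (hB.extVanish i) (hC.extVanish (i + 1))) hA

-- Dualise a syzygy of `Dual R X`.
theorem exists_cosyzygy [IsNoetherianRing R] (hX : IsTotallyReflexive R X) :
    ∃ (F X' : ModuleCat.{u} R) (f : X →ₗ[R] F) (g : F →ₗ[R] X'), Module.Finite R F ∧
      Module.Projective R F ∧ IsTotallyReflexive R X' ∧ IsShortExact R f g := by
  have := hX.finite
  have := hX.isReflexive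
  obtain ⟨n, p, hp⟩ := Module.Finite.exists_fin' R (Module.Dual R X)
  have h := isShortExact_subtype_ker hp
  have hker := left_of_isShortExact of_projective hX.dual h
  exact ⟨.of R (Module.Dual R (Fin n → R)), .of R (Module.Dual R (LinearMap.ker p)), _, _,
    inferInstanceAs (Module.Finite R (Module.Dual R (Fin n → R))),
    inferInstanceAs (Module.Projective R (Module.Dual R (Fin n → R))), hker.dual,
    (h.dual (hX.extVanish_dual 0)).comp_linearEquiv (Module.evalEquiv R X)⟩

end IsTotallyReflexive

section FiberProduct

variable {R}
variable {A B C D K M : Type u} [AddCommGroup A] [Module R A] [AddCommGroup B] [Module R B]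
  [AddCommGroup C] [Module R C] [AddCommGroup D] [Module R D] [AddCommGroup K] [Module R K]
  [AddCommGroup M] [Module R M]

/-- The fibre product `B ×_C D` of two linear maps, as a submodule of `B × D`; it is used to
compare two modules mapping to the same third one. -/
def fiberProduct (g : B →ₗ[R] C) (φ : D →ₗ[R] C) : Submodule R (B × D) :=
  LinearMap.eqLocus (g.comp (LinearMap.fst R B D)) (φ.comp (LinearMap.snd R B D))

namespace fiberProduct

/-- The first projection of a fibre product. -/
def fst (g : B →ₗ[R] C) (φ : D →ₗ[R] C) : fiberProduct g φ →ₗ[R] B :=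
  (LinearMap.fst R B D).domRestrict _

/-- The second projection of a fibre product. -/
def snd (g : B →ₗ[R] C) (φ : D →ₗ[R] C) : fiberProduct g φ →ₗ[R] D :=
  (LinearMap.snd R B D).domRestrict _

end fiberProduct

namespace IsShortExact

variable {f : A →ₗ[R] B} {g : B →ₗ[R] C} {κ : K →ₗ[R] D} {φ : D →ₗ[R] C} {ψ : C →ₗ[R] M}

theorem exists_isShortExact_fiberProduct_snd (h : IsShortExact R f g) (φ : D →ₗ[R] C) :
    ∃ i : A →ₗ[R] fiberProduct g φ, IsShortExact R i (fiberProduct.snd g φ) := by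
  have hf (a : A) : g (f a) = 0 := LinearMap.congr_fun h.comp_eq_zero a
  refine ⟨((LinearMap.inl R B D).comp f).codRestrict _ fun a ↦ (hf a).trans (map_zero φ).symm,
    fun a a' haa' ↦ h.injective congr($haa'.1.1), fun d ↦ ?_, fun ⟨⟨b, d⟩, hbd⟩ ↦ ⟨?_, ?_⟩⟩
  · obtain ⟨b, hb⟩ := h.surjective (φ d)
    exact ⟨⟨(b, d), hb⟩, rfl⟩
  · rintro (rfl : d = 0)
    obtain ⟨a, rfl⟩ := (h.exact b).1 (hbd.trans (map_zero φ))
    exact ⟨a, rfl⟩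
  · rintro ⟨a, ha⟩
    exact congr($ha.1.2).symm

theorem exists_isShortExact_fiberProduct_fst (h : IsShortExact R κ φ) (g : B →ₗ[R] C) :
    ∃ i : K →ₗ[R] fiberProduct g φ, IsShortExact R i (fiberProduct.fst g φ) := by
  have hκ (k : K) : φ (κ k) = 0 := LinearMap.congr_fun h.comp_eq_zero k
  refine ⟨((LinearMap.inr R B D).comp κ).codRestrict _ fun k ↦ (map_zero g).trans (hκ k).symm,
    fun k k' hkk' ↦ h.injective congr($hkk'.1.2), fun b ↦ ?_, fun ⟨⟨b, d⟩, hbd⟩ ↦ ⟨?_, ?_⟩⟩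
  · obtain ⟨d, hd⟩ := h.surjective (g b)
    exact ⟨⟨(b, d), hd.symm⟩, rfl⟩
  · rintro (rfl : b = 0)
    obtain ⟨k, rfl⟩ := (h.exact d).1 (hbd.symm.trans (map_zero g))
    exact ⟨k, rfl⟩
  · rintro ⟨k, hk⟩
    exact congr($hk.1.1).symm

theorem fiberProduct_fst_comp (h : IsShortExact R φ ψ) (hg : Function.Surjective g) :
    IsShortExact R (fiberProduct.fst g φ) (ψ.comp g) := by
  refine ⟨?_, h.surjective.comp hg, fun b ↦ (h.exact (g b)).trans ⟨?_, ?_⟩⟩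
  · rintro ⟨⟨b, d⟩, hbd⟩ ⟨⟨b', d'⟩, hbd'⟩ (rfl : b = b')
    obtain rfl : d = d' := h.injective (hbd.symm.trans hbd')
    rfl
  · rintro ⟨d, hd⟩
    exact ⟨⟨(b, d), hd.symm⟩, rfl⟩
  · rintro ⟨⟨⟨b, d⟩, hbd⟩, rfl⟩
    exact ⟨d, hbd.symm⟩

end IsShortExact

end FiberProduct

namespace GdimLE

variable {R}
variable {A : Type u} [AddCommGroup A] [Module R A] {n : ℕ}

theorem of_isShortExact {B C : ModuleCat.{u} R} {f : A →ₗ[R] B} {g : B →ₗ[R] C}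
    (hC : GdimLE R n C) (hA : IsTotallyReflexive R A) (h : IsShortExact R f g) :
    GdimLE R n B := by
  cases n with
  | zero => exact hA.of_isShortExact hC h
  | succ n =>
    obtain ⟨X, K, κ, φ, hX, hφ, hK⟩ := hC
    obtain ⟨i, hi⟩ := h.exists_isShortExact_fiberProduct_snd φ
    obtain ⟨j, hj⟩ := hφ.exists_isShortExact_fiberProduct_fst g
    exact ⟨.of R (fiberProduct g φ), K, j, fiberProduct.fst g φ, hA.of_isShortExact hX hi, hj, hK⟩

theorem exists_syzygy [IsNoetherianRing R] {M : ModuleCat.{u} R} (hM : GdimLE R (n + 1) M) :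
    ∃ (F N : ModuleCat.{u} R) (f : N →ₗ[R] F) (g : F →ₗ[R] M), Module.Finite R F ∧
      Module.Free R F ∧ IsShortExact R f g ∧ GdimLE R n N := by
  obtain ⟨X, K, φ, ψ, hX, hφ, hK⟩ := hM
  have := hX.finite
  obtain ⟨m, p, hp⟩ := Module.Finite.exists_fin' R X
  have h := isShortExact_subtype_ker hp
  obtain ⟨i, hi⟩ := h.exists_isShortExact_fiberProduct_snd φ
  have hker : IsTotallyReflexive R (LinearMap.ker p) := .left_of_isShortExact .of_projective hX h
  exact ⟨.of R (Fin m → R), .of R (fiberProduct p φ), fiberProduct.fst p φ, ψ.comp p,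
    inferInstanceAs (Module.Finite R (Fin m → R)), inferInstanceAs (Module.Free R (Fin m → R)),
    hφ.fiberProduct_fst_comp hp, of_isShortExact hK hker hi⟩

end GdimLE

namespace InjdimLE

variable {R}

theorem extVanish {d i : ℕ} {M : ModuleCat.{u} R} (hM : InjdimLE R d M) (hi : d < i)
    (X : Type u) [AddCommGroup X] [Module R X] : ExtVanish R X M i := by
  induction d generalizing M i with
  | zero =>
    obtain ⟨i, rfl⟩ := Nat.exists_eq_add_of_lt hi
    have : Module.Injective R M := hM
    exact .of_injective
  | succ d ih =>
    obtain ⟨I, C, f, g, hI, h, hC⟩ := hM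
    obtain ⟨i, rfl⟩ := Nat.exists_eq_add_of_lt hi
    exact h.covariant_extVanish₁ .of_injective (ih hC (by lia))

end InjdimLE

/-- `N` is right `Ext`-orthogonal to the totally reflexive modules: `Ext^i(X, N) = 0` for every
totally reflexive `X` and every `i ≥ 1`. On this class of modules Gorenstein dimension and
projective dimension coincide. -/
def IsExtOrthogonal (N : Type u) [AddCommGroup N] [Module R N] : Prop :=
  ∀ X : ModuleCat.{u} R, IsTotallyReflexive R X → ∀ i, ExtVanish R X N (i + 1)

namespace IsExtOrthogonal

variable {R}
variable {A B C N : Type u} [AddCommGroup A] [Module R A] [AddCommGroup B] [Module R B]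
  [AddCommGroup C] [Module R C] [AddCommGroup N] [Module R N] {f : A →ₗ[R] B} {g : B →ₗ[R] C}

theorem of_extVanish_of_lt [IsNoetherianRing R] {d : ℕ}
    (h : ∀ X : ModuleCat.{u} R, IsTotallyReflexive R X → ∀ i, d < i → ExtVanish R X N i) :
    IsExtOrthogonal R N := by
  induction d with
  | zero => exact fun X hX i ↦ h X hX _ i.succ_pos
  | succ d ih =>
    refine ih fun X hX i hi ↦ ?_
    obtain ⟨F, X', f, g, -, hF, hX', hs⟩ := hX.exists_cosyzygy
    obtain ⟨i, rfl⟩ := Nat.exists_eq_add_of_lt hi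
    exact hs.contravariant_extVanish₁ .of_projective (h X' hX' _ (by lia))

theorem congr (e : A ≃ₗ[R] B) (hA : IsExtOrthogonal R A) : IsExtOrthogonal R B :=
  fun X hX i ↦ (extVanish_congr_right e).1 (hA X hX i)

theorem pi {ι : Type} [Finite ι] (hN : IsExtOrthogonal R N) : IsExtOrthogonal R (ι → N) :=
  fun X hX i ↦ .pi fun _ ↦ hN X hX i

theorem of_free [Module.Finite R N] [Module.Free R N] : IsExtOrthogonal R N :=
  have hR : IsExtOrthogonal R R := fun _ hX i ↦ hX.extVanish i
  hR.pi.congr ((Module.Free.chooseBasis R N).reindex (Fintype.equivFin _)).equivFun.symm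

theorem of_isShortExact (hA : IsExtOrthogonal R A) (hC : IsExtOrthogonal R C)
    (h : IsShortExact R f g) : IsExtOrthogonal R B :=
  fun X hX i ↦ h.covariant_extVanish₂ (hA X hX i) (hC X hX i)

theorem left_of_isShortExact [IsNoetherianRing R] (hB : IsExtOrthogonal R B)
    (hC : IsExtOrthogonal R C) (h : IsShortExact R f g) : IsExtOrthogonal R A := by
  refine of_extVanish_of_lt (d := 1) fun X hX i hi ↦ ?_
  obtain ⟨i, rfl⟩ := Nat.exists_eq_add_of_lt hi
  rw [add_comm 1 i]
  exact h.covariant_extVanish₁ (hB X hX _) (hC X hX i)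

theorem of_isSyzygy [IsNoetherianRing R] {n : ℕ} {S K : ModuleCat.{u} R}
    (hK : IsExtOrthogonal R K) (hS : IsSyzygy R n S K) : IsExtOrthogonal R S := by
  induction n generalizing K with
  | zero => exact hS.elim fun e ↦ hK.congr e.symm
  | succ n ih =>
    obtain ⟨W, F, f, g, hfree, hfin, h, hS⟩ := hS
    exact ih (of_free.left_of_isShortExact hK h) hS

theorem of_reducingStep [IsNoetherianRing R] {K L : ModuleCat.{u} R} {a b n : ℕ}
    (hK : IsExtOrthogonal R K) (h : ReducingStep R K L a b n) : IsExtOrthogonal R L := by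
  obtain ⟨W, f, g, hW, hfg⟩ := h
  exact of_isShortExact hK.pi (hK.of_isSyzygy hW).pi hfg

theorem projective_of_isTotallyReflexive [IsNoetherianRing R] (hN : IsExtOrthogonal R N)
    (hN' : IsTotallyReflexive R N) : Module.Projective R N := by
  obtain ⟨F, X, f, g, -, hF, hX, h⟩ := hN'.exists_cosyzygy
  obtain ⟨r, hr⟩ := h.exists_comp_eq_of_extVanish (hN X hX 0) LinearMap.id
  exact .of_split f r hr

end IsExtOrthogonal

section Reducing

variable {R}

theorem PdimLE.gdimLE {n : ℕ} {K : ModuleCat.{u} R} (hK : PdimLE R n K) : GdimLE R n K := by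
  induction n generalizing K with
  | zero =>
    obtain ⟨hfin, hproj⟩ := hK
    exact .of_projective
  | succ n ih =>
    obtain ⟨X, L, f, g, hfin, hproj, h, hL⟩ := hK
    exact ⟨X, L, f, g, .of_projective, h, ih hL⟩

theorem IsExtOrthogonal.pdimLE_of_gdimLE [IsNoetherianRing R] {n : ℕ} {K : ModuleCat.{u} R}
    (hK : IsExtOrthogonal R K) (hG : GdimLE R n K) : PdimLE R n K := by
  induction n generalizing K with
  | zero => exact ⟨hG.1, hK.projective_of_isTotallyReflexive hG⟩
  | succ n ih =>
    obtain ⟨F, N, f, g, hfin, hfree, h, hN⟩ := hG.exists_syzygy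
    exact ⟨F, N, f, g, hfin, inferInstance, h, ih (of_free.left_of_isShortExact hK h) hN⟩

theorem HasReducingSeq.imp {P P' Q : ModuleCat.{u} R → Prop} {M : ModuleCat.{u} R} {r : ℕ}
    (h : HasReducingSeq R P M r) (hM : Q M)
    (hQ : ∀ {K L a b n}, Q K → ReducingStep R K L a b n → Q L) (hPP' : ∀ N, Q N → P N → P' N) :
    HasReducingSeq R P' M r := by
  obtain ⟨K, a, b, n, rfl, hfin, hstep, hP⟩ := h
  have hK (i) : Q (K i) := Fin.induction hM (fun i hi ↦ hQ hi (hstep i).2.2.2) i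
  exact ⟨K, a, b, n, rfl, hfin, hstep, hPP' _ (hK _) hP⟩

theorem reducingDim_congr {P P' Q : ModuleCat.{u} R → Prop} {M : ModuleCat.{u} R} (hM : Q M)
    (hQ : ∀ {K L a b n}, Q K → ReducingStep R K L a b n → Q L) (hPP' : ∀ N, Q N → (P N ↔ P' N)) :
    ReducingDim R P M = ReducingDim R P' M := by
  have hseq (r : ℕ) : HasReducingSeq R P M r ↔ HasReducingSeq R P' M r :=
    ⟨fun h ↦ h.imp hM hQ fun N hN ↦ (hPP' N hN).1, fun h ↦ h.imp hM hQ fun N hN ↦ (hPP' N hN).2⟩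
  simp only [ReducingDim, hseq]

end Reducing

theorem stmt2_general (R : Type u) [CommRing R] [IsNoetherianRing R] (M : ModuleCat.{u} R) (d : ℕ)
    (hM : ∀ X : ModuleCat.{u} R, IsTotallyReflexive R X → ∀ i, d < i → ExtVanish R X M i) :
    rGdim R M = rPdim R M :=
  reducingDim_congr (Q := fun N ↦ IsExtOrthogonal R N) (.of_extVanish_of_lt hM)
    .of_reducingStep fun _ hN ↦
      exists_congr fun _ ↦ ⟨hN.pdimLE_of_gdimLE, PdimLE.gdimLE⟩

theorem stmt2 (R : Type u) [CommRing R] [IsNoetherianRing R] [IsLocalRing R]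
    (M : Type u) [AddCommGroup M] [Module R M] [Module.Finite R M] [Nontrivial M]
    (hinj : ∃ n : ℕ, InjdimLE R n (ModuleCat.of R M)) :
    rGdim R (ModuleCat.of R M) = rPdim R (ModuleCat.of R M) := by
  obtain ⟨d, hd⟩ := hinj
  exact stmt2_general R (.of R M) d fun X _ _ hi ↦ hd.extVanish hi X
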